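/- arXiv:1701.08555 — 2 statements merged into one kernel-verified Lean document; each statement's English description precedes it below -/
import Mathlib

section
/- Fix r_1 < ... < r_k with d = gcd(r_1,...,r_k), and fix n > r_k² with M_n primitive. Let ρ be a minimal presentation of M_n (a minimal set of relations generating the congruence ker π_n). Then for any (z, z') ∈ ker π_n there exists a monotone ρ-chain from z to z': a sequence z = a_0, a_1, ..., a_r = z' with |a_0|, ..., |a_r| a monotone sequence, and for each i, (a_{i−1}, a_i) = (b_i, b_i') + (u_i, u_i) for some (b_i, b_i') ∈ ρ ∪ ρ^{-1} and u_i ∈ ℕ^{k+1}. -/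
open Finset

/-- Length of a factorization. -/
def vlen {m : ℕ} (z : Fin m → ℕ) : ℕ := ∑ i, z i

/-- Factorization homomorphism of `M_n = ⟨n, n+r_1, ..., n+r_k⟩`. -/
def piM (k n : ℕ) (r : Fin (k + 1) → ℕ) (z : Fin (k + 2) → ℕ) : ℕ :=
  z 0 * n + ∑ i : Fin (k + 1), z i.succ * (n + r i)

/-- Two factorizations of `β` lie in the same connected component of the factorization
graph `∇_β`: there is a path of factorizations of `β`, consecutive ones sharing a
common positive coordinate. -/
def SameComp {m : ℕ} (π : (Fin m → ℕ) → ℕ) (β : ℕ) :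
    (Fin m → ℕ) → (Fin m → ℕ) → Prop :=
  Relation.ReflTransGen (fun a b => π a = β ∧ π b = β ∧ ∃ i, 0 < a i ∧ 0 < b i)

/-- `β` is a Betti element: its factorization graph is disconnected. -/
def IsBetti {m : ℕ} (π : (Fin m → ℕ) → ℕ) (β : ℕ) : Prop :=
  ∃ z z', π z = β ∧ π z' = β ∧ ¬ SameComp π β z z'

/-- The map `Φ_n` on pairs of factorizations. -/
def Phi (k : ℕ) (p : (Fin (k + 2) → ℕ) × (Fin (k + 2) → ℕ)) :
    (Fin (k + 2) → ℕ) × (Fin (k + 2) → ℕ) :=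
  if vlen p.2 < vlen p.1 then
    (p.1 + (vlen p.1 - vlen p.2) • Pi.single (0 : Fin (k + 2)) 1,
     p.2 + (vlen p.1 - vlen p.2) • Pi.single (Fin.last (k + 1)) 1)
  else if vlen p.1 < vlen p.2 then
    (p.1 + (vlen p.2 - vlen p.1) • Pi.single (Fin.last (k + 1)) 1,
     p.2 + (vlen p.2 - vlen p.1) • Pi.single (0 : Fin (k + 2)) 1)
  else p

/-- The congruence generated by a set of relations `ρ`. -/
inductive CongGen {m : ℕ} (ρ : Set ((Fin m → ℕ) × (Fin m → ℕ))) :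
    (Fin m → ℕ) → (Fin m → ℕ) → Prop
  | of {z z'} : (z, z') ∈ ρ → CongGen ρ z z'
  | refl (z) : CongGen ρ z z
  | symm {z z'} : CongGen ρ z z' → CongGen ρ z' z
  | trans {x y z} : CongGen ρ x y → CongGen ρ y z → CongGen ρ x z
  | add {z z'} (u) : CongGen ρ z z' → CongGen ρ (z + u) (z' + u)

/-- `ρ` is a presentation for the monoid with factorization homomorphism `π`. -/
def IsPres {m : ℕ} (π : (Fin m → ℕ) → ℕ)
    (ρ : Set ((Fin m → ℕ) × (Fin m → ℕ))) : Prop :=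
  (∀ p ∈ ρ, π p.1 = π p.2) ∧ ∀ z z', CongGen ρ z z' ↔ π z = π z'

/-- `ρ` is a minimal presentation. -/
def IsMinPres {m : ℕ} (π : (Fin m → ℕ) → ℕ)
    (ρ : Set ((Fin m → ℕ) × (Fin m → ℕ))) : Prop :=
  IsPres π ρ ∧ ∀ ρ' ⊆ ρ, IsPres π ρ' → ρ' = ρ

/-- Primitivity of `M_n`: the gcd of the generators is 1. -/
def Primitive (k n : ℕ) (r : Fin (k + 1) → ℕ) : Prop :=
  Nat.gcd n (Finset.univ.gcd fun i : Fin (k + 1) => n + r i) = 1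

/-- Distance between two factorizations. -/
def fdist {m : ℕ} (z z' : Fin m → ℕ) : ℕ :=
  max (∑ i, (z i - min (z i) (z' i))) (∑ i, (z' i - min (z i) (z' i)))

lemma vlen_add' {m : ℕ} (x y : Fin m → ℕ) : vlen (x + y) = vlen x + vlen y := by
  simp [vlen, Finset.sum_add_distrib]

lemma vlen_single' {m : ℕ} (t : Fin m) (a : ℕ) :
    vlen (Pi.single t a : Fin m → ℕ) = a := by
  simp [vlen]

/-- weighted sum -/
def wsum {m : ℕ} (c z : Fin m → ℕ) : ℕ := ∑ i, z i * c i

lemma wsum_add {m : ℕ} (c x y : Fin m → ℕ) : wsum c (x + y) = wsum c x + wsum c y := by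
  simp [wsum, Finset.sum_add_distrib, add_mul]

lemma wsum_single {m : ℕ} (c : Fin m → ℕ) (t : Fin m) (a : ℕ) :
    wsum c (Pi.single t a) = a * c t := by
  unfold wsum
  rw [Finset.sum_eq_single t]
  · simp
  · intro b _ hb
    simp [hb]
  · simp

lemma wsum_le {m : ℕ} (c z : Fin m → ℕ) (R : ℕ) (hc : ∀ i, c i ≤ R) :
    wsum c z ≤ vlen z * R := by
  unfold wsum vlen
  rw [Finset.sum_mul]
  exact Finset.sum_le_sum fun i _ => Nat.mul_le_mul_left _ (hc i)

lemma exists_chain {m : ℕ} (y : Fin m → ℕ) :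
    ∀ N, N ≤ vlen y → ∃ p : ℕ → Fin m → ℕ, Monotone p ∧ (∀ i, p i ≤ y) ∧
      ∀ i ≤ N, vlen (p i) = i := by
  intro N
  induction N with
  | zero =>
    intro _
    refine ⟨fun _ => 0, fun _ _ _ => le_rfl, fun i j => Nat.zero_le _, ?_⟩
    intro i hi
    simp [vlen]; omega
  | succ N ih =>
    intro hN
    obtain ⟨p, hp, hpy, hpl⟩ := ih (by omega)
    have hj : ∃ j, p N j < y j := by
      by_contra! hcon
      have : vlen y ≤ vlen (p N) := Finset.sum_le_sum fun i _ => hcon i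
      rw [hpl N le_rfl] at this
      omega
    obtain ⟨j, hj⟩ := hj
    have hq : p N + Pi.single j 1 ≤ y := by
      intro i
      by_cases h : i = j
      · subst h; simpa using hj
      · simpa [h] using hpy N i
    refine ⟨fun i => if i ≤ N then p i else p N + Pi.single j 1, ?_, ?_, ?_⟩
    · intro a b hab
      dsimp only
      split_ifs with h1 h2 h2
      · exact hp hab
      · exact (hp h1).trans (by intro i; simp)
      · omega
      · exact le_rfl
    · intro i
      dsimp only
      split_ifs
      · exact hpy i
      · exact hq
    · intro i hi
      dsimp only
      split_ifs with h1
      · exact hpl i h1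
      · rw [vlen_add', vlen_single', hpl N le_rfl]; omega

lemma trade {m : ℕ} (c : Fin m → ℕ) (R : ℕ) (hR : 0 < R) (hc : ∀ i, c i ≤ R)
    (s t : Fin m) (hs : c s = 0) (ht : c t = R) (z : Fin m → ℕ)
    (hz : R ^ 2 < wsum c z) :
    ∃ w, vlen w = vlen z ∧ wsum c w = wsum c z ∧ 0 < w t ∧ ∃ j, 0 < z j ∧ 0 < w j := by
  classical
  set y : Fin m → ℕ := fun i => if 0 < c i then z i else 0 with hy
  have hyz : y ≤ z := by
    intro i
    simp only [hy]
    split_ifs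
    · exact le_rfl
    · exact Nat.zero_le _
  have hsum : wsum c y = wsum c z := by
    unfold wsum
    refine Finset.sum_congr rfl fun i _ => ?_
    simp only [hy]
    split_ifs with h
    · rfl
    · have : c i = 0 := by omega
      simp [this]
  have hlen : R < vlen y := by
    have h1 := wsum_le c y R hc
    rw [hsum] at h1
    nlinarith
  obtain ⟨p, hpm, hpy, hpl⟩ := exists_chain y R hlen.le
  obtain ⟨a, ha, b, hb, hne, hab⟩ :=
    Finset.exists_ne_map_eq_of_card_lt_of_maps_to
      (s := Finset.range (R + 1)) (t := Finset.range R) (by simp)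
      (f := fun i => wsum c (p i) % R)
      (fun i _ => by simpa using Nat.mod_lt _ hR)
  obtain ⟨a, b, hlt, hbR, hab⟩ : ∃ a b, a < b ∧ b ≤ R ∧
      wsum c (p a) % R = wsum c (p b) % R := by
    simp only [Finset.mem_range] at ha hb
    rcases lt_or_gt_of_ne hne with h | h
    · exact ⟨a, b, h, by omega, hab⟩
    · exact ⟨b, a, h, by omega, hab.symm⟩
  obtain ⟨q, hq⟩ : ∃ q, p b = p a + q := ⟨p b - p a, by
    funext i; have : p a i ≤ p b i := hpm hlt.le i
    simp; omega⟩
  have hqy : q ≤ y := by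
    intro i
    have : p b i ≤ y i := hpy b i
    rw [hq] at this
    simp only [Pi.add_apply] at this
    show q i ≤ y i
    omega
  have hql : vlen q + a = b := by
    have h1 := hpl b hbR
    rw [hq, vlen_add', hpl a (by omega)] at h1
    omega
  have hdvd : R ∣ wsum c q := by
    rw [hq, wsum_add] at hab
    have : (wsum c (p a) + 0) ≡ wsum c (p a) + wsum c q [MOD R] := by
      simpa [Nat.ModEq] using hab
    have h2 := Nat.ModEq.add_left_cancel' _ this
    exact (Nat.modEq_zero_iff_dvd).1 h2.symm
  obtain ⟨M, hM⟩ := hdvd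
  have hMle : M ≤ vlen q := by
    have := wsum_le c q R hc
    rw [hM] at this
    nlinarith
  have hMpos : 0 < M := by
    obtain ⟨i, hi⟩ : ∃ i, 0 < q i := by
      by_contra! hcon
      have : vlen q = 0 := Finset.sum_eq_zero fun i _ => by have := hcon i; omega
      omega
    have hci : 0 < c i := by
      by_contra h
      have := hqy i
      simp only [hy, if_neg h] at this
      omega
    have h1 : q i * c i ≤ wsum c q :=
      Finset.single_le_sum (f := fun i => q i * c i) (fun _ _ => Nat.zero_le _)
        (Finset.mem_univ i)
    have h2 : 0 < q i * c i := Nat.mul_pos hi hci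
    rcases Nat.eq_zero_or_pos M with h | h
    · subst h; omega
    · exact h
  obtain ⟨x, hx⟩ : ∃ x, z = q + x := ⟨z - q, by
    funext i; have : q i ≤ z i := (hqy.trans hyz) i
    simp; omega⟩
  have hxpos : ∃ j, 0 < x j := by
    by_contra! hcon
    have h0 : vlen x = 0 := Finset.sum_eq_zero fun i _ => by have := hcon i; omega
    have h1 : vlen y ≤ vlen z := Finset.sum_le_sum fun i _ => hyz i
    rw [hx, vlen_add'] at h1
    omega
  obtain ⟨j, hj⟩ := hxpos
  refine ⟨x + (Pi.single t M + Pi.single s (vlen q - M)), ?_, ?_, ?_, j, ?_, ?_⟩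
  · rw [hx]; simp only [vlen_add', vlen_single']; omega
  · rw [hx]; simp only [wsum_add, wsum_single, hs, ht, hM]; ring
  · simp only [Pi.add_apply, Pi.single_eq_same]; omega
  · rw [hx]; simp only [Pi.add_apply]; omega
  · simp only [Pi.add_apply]; omega

/-- one step of a chain -/
def RStep {m : ℕ} (ρ : Set ((Fin m → ℕ) × (Fin m → ℕ))) (x y : Fin m → ℕ) : Prop :=
  ∃ b b' u, ((b, b') ∈ ρ ∨ (b', b) ∈ ρ) ∧ x = b + u ∧ y = b' + u

lemma RStep.symm {m : ℕ} {ρ : Set ((Fin m → ℕ) × (Fin m → ℕ))} {x y : Fin m → ℕ}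
    (h : RStep ρ x y) : RStep ρ y x := by
  obtain ⟨b, b', u, h, hx, hy⟩ := h
  exact ⟨b', b, u, h.symm, hy, hx⟩

lemma RStep.add {m : ℕ} {ρ : Set ((Fin m → ℕ) × (Fin m → ℕ))} {x y : Fin m → ℕ}
    (h : RStep ρ x y) (v : Fin m → ℕ) : RStep ρ (x + v) (y + v) := by
  obtain ⟨b, b', u, h, rfl, rfl⟩ := h
  exact ⟨b, b', u + v, h, add_assoc _ _ _, add_assoc _ _ _⟩

/-- descending chain -/
def Desc {m : ℕ} (ρ : Set ((Fin m → ℕ) × (Fin m → ℕ))) :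
    (Fin m → ℕ) → (Fin m → ℕ) → Prop :=
  Relation.ReflTransGen fun x y => RStep ρ x y ∧ vlen y ≤ vlen x

lemma Desc.add {m : ℕ} {ρ : Set ((Fin m → ℕ) × (Fin m → ℕ))} {x y : Fin m → ℕ}
    (h : Desc ρ x y) (v : Fin m → ℕ) : Desc ρ (x + v) (y + v) := by
  refine Relation.ReflTransGen.lift (fun a => a + v) ?_ _ _ h
  rintro a b ⟨h1, h2⟩
  exact ⟨h1.add v, by simp only [vlen_add']; omega⟩

lemma CongGen.chain {m : ℕ} {ρ : Set ((Fin m → ℕ) × (Fin m → ℕ))} {x y : Fin m → ℕ}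
    (h : CongGen ρ x y) : Relation.ReflTransGen (RStep ρ) x y := by
  induction h with
  | of h => exact Relation.ReflTransGen.single ⟨_, _, 0, Or.inl h, by simp, by simp⟩
  | refl z => exact Relation.ReflTransGen.refl
  | symm _ ih =>
    clear * - ih
    induction ih with
    | refl => exact Relation.ReflTransGen.refl
    | tail _ h ih => exact Relation.ReflTransGen.head h.symm ih
  | trans _ _ ih1 ih2 => exact ih1.trans ih2
  | add u _ ih =>
    exact Relation.ReflTransGen.lift (fun a => a + u) (fun _ _ h => h.add u) _ _ ih

lemma Desc.toSeq {m : ℕ} {ρ : Set ((Fin m → ℕ) × (Fin m → ℕ))} {x y : Fin m → ℕ}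
    (h : Desc ρ x y) : ∃ (N : ℕ) (a : ℕ → Fin m → ℕ), a 0 = x ∧ a N = y ∧
      ∀ i < N, RStep ρ (a i) (a (i + 1)) ∧ vlen (a (i + 1)) ≤ vlen (a i) := by
  induction h with
  | refl => exact ⟨0, fun _ => x, rfl, rfl, by simp⟩
  | @tail b c _ hbc ih =>
    obtain ⟨N, a, h0, hN, hs⟩ := ih
    refine ⟨N + 1, fun i => if i ≤ N then a i else c, by simp [h0], by simp, ?_⟩
    intro i hi
    rcases Nat.lt_or_ge i N with h | h
    · have h1 : i ≤ N := by omega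
      have h2 : i + 1 ≤ N := by omega
      simp only [h1, h2, if_true]
      exact hs i h
    · have h1 : i = N := by omega
      subst h1
      simpa [hN] using hbc

/-- shifts, with zero in front -/
def rr (k : ℕ) (r : Fin (k + 1) → ℕ) : Fin (k + 2) → ℕ := Fin.cons 0 r

lemma piM_eq (k n : ℕ) (r : Fin (k + 1) → ℕ) (z : Fin (k + 2) → ℕ) :
    piM k n r z = vlen z * n + wsum (rr k r) z := by
  simp only [piM, vlen, wsum, rr]
  rw [Fin.sum_univ_succ (fun i => z i), Fin.sum_univ_succ (fun i : Fin (k + 2) => z i * _)]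
  simp only [Fin.cons_zero, Fin.cons_succ, mul_add, Finset.sum_add_distrib, add_mul,
    Finset.sum_mul]
  ring

lemma piM_add (k n : ℕ) (r : Fin (k + 1) → ℕ) (x y : Fin (k + 2) → ℕ) :
    piM k n r (x + y) = piM k n r x + piM k n r y := by
  simp only [piM_eq, vlen_add', wsum_add]; ring

lemma rr_le (k : ℕ) (r : Fin (k + 1) → ℕ) (hmono : StrictMono r) (i) :
    rr k r i ≤ r (Fin.last k) := by
  refine Fin.cases ?_ (fun j => ?_) i
  · simp [rr]
  · simpa [rr] using hmono.monotone (Fin.le_last j)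

lemma rr_last (k : ℕ) (r : Fin (k + 1) → ℕ) :
    rr k r (Fin.last (k + 1)) = r (Fin.last k) := by
  rw [← Fin.succ_last]; simp [rr]

lemma wsum_compl {m : ℕ} (c z : Fin m → ℕ) (R : ℕ) (hc : ∀ i, c i ≤ R) :
    wsum (fun i => R - c i) z + wsum c z = vlen z * R := by
  unfold wsum vlen
  rw [← Finset.sum_add_distrib, Finset.sum_mul]
  refine Finset.sum_congr rfl fun i _ => ?_
  rw [← mul_add, Nat.sub_add_cancel (hc i)]

lemma to_last (k n : ℕ) (r : Fin (k + 1) → ℕ) (hmono : StrictMono r) (hpos : 0 < r 0)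
    (hn : r (Fin.last k) ^ 2 < n) (z w : Fin (k + 2) → ℕ)
    (h : piM k n r z = piM k n r w) (hl : vlen z < vlen w) :
    ∃ x, vlen x = vlen z ∧ piM k n r x = piM k n r z ∧ 0 < x (Fin.last (k + 1)) ∧
      ∃ j, 0 < z j ∧ 0 < x j := by
  have hR : 0 < r (Fin.last k) := hpos.trans_le (hmono.monotone (Fin.zero_le _))
  obtain ⟨x, h1, h2, h3⟩ := trade (rr k r) (r (Fin.last k)) hR (rr_le k r hmono) 0
    (Fin.last (k + 1)) (by simp [rr]) (rr_last k r) z (by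
      rw [piM_eq, piM_eq] at h
      nlinarith)
  exact ⟨x, h1, by rw [piM_eq, piM_eq, h1, h2], h3⟩

lemma to_zero (k n : ℕ) (r : Fin (k + 1) → ℕ) (hmono : StrictMono r) (hpos : 0 < r 0)
    (hn : r (Fin.last k) ^ 2 < n) (z w : Fin (k + 2) → ℕ)
    (h : piM k n r z = piM k n r w) (hl : vlen w < vlen z) :
    ∃ x, vlen x = vlen z ∧ piM k n r x = piM k n r z ∧ 0 < x 0 ∧
      ∃ j, 0 < z j ∧ 0 < x j := by
  have hR : 0 < r (Fin.last k) := hpos.trans_le (hmono.monotone (Fin.zero_le _))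
  have hc := wsum_compl (rr k r) (R := r (Fin.last k)) (hc := rr_le k r hmono)
  obtain ⟨x, h1, h2, h3⟩ := trade (fun i => r (Fin.last k) - rr k r i) (r (Fin.last k)) hR
    (fun i => Nat.sub_le _ _) (Fin.last (k + 1)) 0 (by simp [rr_last]) (by simp [rr]) z (by
      rw [piM_eq, piM_eq] at h
      have hz := hc z
      have hw := hc w
      nlinarith)
  refine ⟨x, h1, ?_, h3⟩
  have hz := hc z
  have hx := hc x
  rw [piM_eq, piM_eq, h1]
  rw [h1] at hx
  omega

lemma exists_drop {m : ℕ} {ρ : Set ((Fin m → ℕ) × (Fin m → ℕ))} (π : (Fin m → ℕ) → ℕ)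
    (hπ : ∀ x y, RStep ρ x y → π x = π y) (β A B : ℕ) (hAB : A ≠ B)
    (hall : ∀ w, π w = β → vlen w = A ∨ vlen w = B) {z z' : Fin m → ℕ}
    (h : Relation.ReflTransGen (RStep ρ) z z') (hz : π z = β) (hzA : vlen z = A)
    (hz' : vlen z' = B) :
    ∃ x y, π x = β ∧ π y = β ∧ vlen x = A ∧ vlen y = B ∧ RStep ρ x y := by
  induction h using Relation.ReflTransGen.head_induction_on with
  | refl => omega
  | @head a c hac _ ih =>
    have hc : π c = β := by rw [← hπ _ _ hac, hz]
    rcases hall c hc with h | h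
    · exact ih hc h
    · exact ⟨a, c, hz, hc, hzA, h, hac⟩

lemma main_desc (k n : ℕ) (r : Fin (k + 1) → ℕ) (hmono : StrictMono r) (hpos : 0 < r 0)
    (hn : r (Fin.last k) ^ 2 < n)
    (ρ : Set ((Fin (k + 2) → ℕ) × (Fin (k + 2) → ℕ)))
    (hρ : IsPres (piM k n r) ρ) :
    ∀ β z z', piM k n r z = β → piM k n r z' = β → vlen z' ≤ vlen z → Desc ρ z z' := by
  have hπ : ∀ x y, RStep ρ x y → piM k n r x = piM k n r y := by
    rintro _ _ ⟨b, b', u, h, rfl, rfl⟩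
    rw [piM_add, piM_add]
    rcases h with h | h
    · rw [hρ.1 _ h]
    · rw [hρ.1 _ h]
  intro β
  induction β using Nat.strong_induction_on with
  | _ β IH =>
  have share : ∀ z z', piM k n r z = β → piM k n r z' = β → vlen z' ≤ vlen z →
      (∃ j, 0 < z j ∧ 0 < z' j) → Desc ρ z z' := by
    rintro z z' hz hz' hl ⟨j, hj, hj'⟩
    have key : ∀ y : Fin (k + 2) → ℕ, 0 < y j → ∃ x : Fin (k + 2) → ℕ, y = x + Pi.single j 1 := by
      intro y hy
      refine ⟨y - Pi.single j 1, ?_⟩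
      funext i
      by_cases h : i = j
      · subst h; simp; omega
      · simp [h]
    obtain ⟨x, rfl⟩ := key z hj
    obtain ⟨x', rfl⟩ := key z' hj'
    have hpos1 : 0 < piM k n r (Pi.single j 1) := by
      rw [piM_eq, vlen_single']; omega
    rw [piM_add] at hz hz'
    rw [vlen_add', vlen_add'] at hl
    exact (IH (piM k n r x) (by omega) x x' rfl (by omega) (by omega)).add _
  have viaLast : ∀ z z' w, piM k n r z = β → piM k n r z' = β → piM k n r w = β →
      vlen z' ≤ vlen z → vlen z < vlen w → Desc ρ z z' := by
    intro z z' w hz hz' hw hl hlw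
    obtain ⟨x, hx1, hx2, hx3, j, hj1, hj2⟩ :=
      to_last k n r hmono hpos hn z w (by omega) hlw
    obtain ⟨x', hx1', hx2', hx3', j', hj1', hj2'⟩ :=
      to_last k n r hmono hpos hn z' w (by omega) (by omega)
    exact ((share z x hz (by omega) (by omega) ⟨j, hj1, hj2⟩).trans
      (share x x' (by omega) (by omega) (by omega) ⟨_, hx3, hx3'⟩)).trans
      (share x' z' (by omega) hz' (by omega) ⟨j', hj2', hj1'⟩)
  have viaZero : ∀ z z' w, piM k n r z = β → piM k n r z' = β → piM k n r w = β →
      vlen z' ≤ vlen z → vlen w < vlen z' → Desc ρ z z' := by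
    intro z z' w hz hz' hw hl hlw
    obtain ⟨x, hx1, hx2, hx3, j, hj1, hj2⟩ :=
      to_zero k n r hmono hpos hn z w (by omega) (by omega)
    obtain ⟨x', hx1', hx2', hx3', j', hj1', hj2'⟩ :=
      to_zero k n r hmono hpos hn z' w (by omega) (by omega)
    exact ((share z x hz (by omega) (by omega) ⟨j, hj1, hj2⟩).trans
      (share x x' (by omega) (by omega) (by omega) ⟨_, hx3, hx3'⟩)).trans
      (share x' z' (by omega) hz' (by omega) ⟨j', hj2', hj1'⟩)
  intro z z' hz hz' hl
  have hchain := ((hρ.2 z z').2 (by omega)).chain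
  by_cases hex : ∃ w, piM k n r w = β ∧ ¬ (vlen w = vlen z ∨ vlen w = vlen z')
  · obtain ⟨w, hw, hne⟩ := hex
    rcases Nat.lt_or_ge (vlen z) (vlen w) with h1 | h1
    · exact viaLast z z' w hz hz' hw hl h1
    rcases Nat.lt_or_ge (vlen w) (vlen z') with h2 | h2
    · exact viaZero z z' w hz hz' hw hl h2
    exact (viaZero z w z' hz hw hz' h1 (by omega)).trans
      (viaLast w z' z hw hz' hz h2 (by omega))
  · have hall : ∀ w, piM k n r w = β → vlen w = vlen z ∨ vlen w = vlen z' := by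
      intro w hw
      by_contra hc
      exact hex ⟨w, hw, hc⟩
    rcases Nat.eq_or_lt_of_le hl with he | hlt
    · clear hl hex
      induction hchain using Relation.ReflTransGen.head_induction_on with
      | refl => exact Relation.ReflTransGen.refl
      | @head a c hac _ ih =>
        have hc : piM k n r c = β := by rw [← hπ _ _ hac, hz]
        have hlc : vlen c = vlen a := by rcases hall c hc with h | h <;> omega
        refine Relation.ReflTransGen.head ⟨hac, hlc.le⟩ (ih hc ?_ (by omega))
        intro w hw
        rcases hall w hw with h | h <;> omega
    · obtain ⟨x, y, hx, hy, hxl, hyl, hxy⟩ := exists_drop (piM k n r) hπ β (vlen z) (vlen z')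
        (by omega) hall hchain hz rfl rfl
      exact (viaZero z x z' hz hx hz' (by omega) (by omega)).trans
        (Relation.ReflTransGen.head ⟨hxy, by omega⟩
          (viaLast y z' z hy hz' hz (by omega) (by omega)))

/-- For `n > r_k²` with `M_n` primitive, any pair in `ker π_n` is connected by a
monotone `ρ`-chain, for any minimal presentation `ρ` of `M_n`. -/
theorem stmt9 (k n : ℕ) (r : Fin (k + 1) → ℕ) (hmono : StrictMono r) (hpos : 0 < r 0)
    (hn : r (Fin.last k) ^ 2 < n) (hprim : Primitive k n r)
    (ρ : Set ((Fin (k + 2) → ℕ) × (Fin (k + 2) → ℕ)))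
    (hρ : IsMinPres (piM k n r) ρ)
    (z z' : Fin (k + 2) → ℕ) (h : piM k n r z = piM k n r z') :
    ∃ (N : ℕ) (a : Fin (N + 1) → Fin (k + 2) → ℕ),
      a 0 = z ∧ a (Fin.last N) = z' ∧
      ((Monotone fun i => vlen (a i)) ∨ (Antitone fun i => vlen (a i))) ∧
      ∀ i : Fin N, ∃ b b' u, ((b, b') ∈ ρ ∨ (b', b) ∈ ρ) ∧
        a i.castSucc = b + u ∧ a i.succ = b' + u := by
  have hmain := main_desc k n r hmono hpos hn ρ hρ.1 (piM k n r z)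
  rcases le_total (vlen z') (vlen z) with hl | hl
  · obtain ⟨N, a, h0, hN, hs⟩ := (hmain z z' rfl h.symm hl).toSeq
    refine ⟨N, fun i => a i, by simpa using h0, by simpa using hN, Or.inr ?_, ?_⟩
    · rw [Fin.antitone_iff_succ_le]
      intro i
      simpa using (hs i i.2).2
    · intro i
      simpa [RStep] using (hs i i.2).1
  · obtain ⟨N, a, h0, hN, hs⟩ := (hmain z' z h.symm rfl hl).toSeq
    refine ⟨N, fun i => a (N - i), by simpa using hN, by simpa using h0, Or.inl ?_, ?_⟩
    · rw [Fin.monotone_iff_le_succ]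
      intro i
      have := (hs (N - (i + 1)) (by omega)).2
      rw [show N - ((i : ℕ) + 1) + 1 = N - i by omega] at this
      simpa using this
    · intro i
      have := (hs (N - (i + 1)) (by omega)).1.symm
      rw [show N - ((i : ℕ) + 1) + 1 = N - i by omega] at this
      simpa [RStep] using this
end

section
/- Fix r_1 < ... < r_k. The function n ↦ |Betti(M_n)| is r_k-periodic for n > r_k²: for all n > r_k² with M_n and M_{n+r_k} primitive, |Betti(M_{n+r_k})| = |Betti(M_n)|. -/
open Finset

namespace Shift

def wt {m : ℕ} (ρ : Fin m → ℕ) (z : Fin m → ℕ) : ℕ := ∑ i, z i * ρ i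

def InF {m : ℕ} (ρ : Fin m → ℕ) (L w : ℕ) (z : Fin m → ℕ) : Prop :=
  vlen z = L ∧ wt ρ z = w

structure Adm {k : ℕ} (ρ : Fin (k + 2) → ℕ) (R : ℕ) : Prop where
  pos : 1 ≤ R
  zero : ρ 0 = 0
  last : ρ (Fin.last (k + 1)) = R
  mid1 : ∀ j, j ≠ 0 → j ≠ Fin.last (k + 1) → 1 ≤ ρ j
  mid2 : ∀ j, j ≠ 0 → j ≠ Fin.last (k + 1) → ρ j + 1 ≤ R

theorem vlen_add {m : ℕ} (a b : Fin m → ℕ) : vlen (a + b) = vlen a + vlen b := by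
  simp [vlen, Finset.sum_add_distrib]

theorem wt_add {m : ℕ} (ρ a b : Fin m → ℕ) : wt ρ (a + b) = wt ρ a + wt ρ b := by
  simp [wt, Finset.sum_add_distrib, add_mul]

theorem vlen_single {m : ℕ} (j : Fin m) (c : ℕ) : vlen (Pi.single j c) = c := by
  simp [vlen]

theorem wt_single {m : ℕ} (ρ : Fin m → ℕ) (j : Fin m) (c : ℕ) :
    wt ρ (Pi.single j c) = c * ρ j := by
  unfold wt
  rw [Finset.sum_eq_single j]
  · simp
  · intro b _ hb; simp [hb]
  · simp

/-- A maximal chain below `m`. -/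
theorem chain {p : ℕ} (m : Fin p → ℕ) :
    ∃ f : ℕ → (Fin p → ℕ), Monotone f ∧ (∀ t, f t ≤ m) ∧ ∀ t ≤ vlen m, vlen (f t) = t := by
  have step : ∀ a : Fin p → ℕ, ∃ b, a ≤ b ∧ (a ≤ m → b ≤ m) ∧
      (a ≤ m → vlen a < vlen m → vlen b = vlen a + 1) := by
    intro a
    by_cases h : ∃ j, a j < m j
    · obtain ⟨j, hj⟩ := h
      refine ⟨a + Pi.single j 1, ?_, ?_, ?_⟩
      · intro x; simp
      · intro ha x
        by_cases hx : x = j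
        · subst hx; simp; omega
        · simp [hx]; exact ha x
      · intro _ _; rw [vlen_add, vlen_single]
    · push Not at h
      refine ⟨a, le_rfl, id, ?_⟩
      intro _ hlt
      have : vlen m ≤ vlen a := Finset.sum_le_sum fun j _ => h j
      omega
  choose g hg1 hg2 hg3 using step
  refine ⟨fun t => g^[t] 0, ?_, ?_, ?_⟩
  · refine monotone_nat_of_le_succ fun t => ?_
    simp only [Function.iterate_succ_apply']
    exact hg1 _
  · intro t
    induction t with
    | zero => intro x; simp
    | succ t ih => simp only [Function.iterate_succ_apply']; exact hg2 _ ih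
  · have hle : ∀ t, g^[t] 0 ≤ m := by
      intro t
      induction t with
      | zero => intro x; simp
      | succ t ih => simp only [Function.iterate_succ_apply']; exact hg2 _ ih
    intro t
    induction t with
    | zero => intro _; simp [vlen]
    | succ t ih =>
      intro ht
      have := ih (by omega)
      simp only [Function.iterate_succ_apply'] at this ⊢
      rw [hg3 _ (hle t) (by omega), this]

theorem zerosum {p : ℕ} (ρ m : Fin p → ℕ) (R : ℕ) (hR : 1 ≤ R) (hm : R ≤ vlen m) :
    ∃ u ≤ m, 0 < vlen u ∧ R ∣ wt ρ u := by
  obtain ⟨f, hf, hle, hlen⟩ := chain m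
  have : ∃ x ∈ Finset.range (R + 1), ∃ y ∈ Finset.range (R + 1), x ≠ y ∧
      wt ρ (f x) % R = wt ρ (f y) % R := by
    apply Finset.exists_ne_map_eq_of_card_lt_of_maps_to (t := Finset.range R)
    · simp
    · intro x _
      simp only [Finset.coe_range, Set.mem_Iio]
      exact Nat.mod_lt _ hR
  have key : ∀ x y, x < y → y ≤ R → wt ρ (f x) % R = wt ρ (f y) % R →
      ∃ u ≤ m, 0 < vlen u ∧ R ∣ wt ρ u := by
    intro x y hxy hy h
    have hs : f y = f x + (f y - f x) := by
      ext j; have : f x j ≤ f y j := hf hxy.le j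
      simp; omega
    refine ⟨f y - f x, ?_, ?_, ?_⟩
    · intro j; have : f y j ≤ m j := hle y j
      simp; omega
    · have h1 := hlen x (by omega)
      have h2 := hlen y (by omega)
      rw [hs, vlen_add] at h2
      omega
    · rw [hs, wt_add] at h
      have h' : wt ρ (f x) + 0 ≡ wt ρ (f x) + wt ρ (f y - f x) [MOD R] := h
      have h2 := Nat.ModEq.add_left_cancel' _ h'
      exact (Nat.modEq_zero_iff_dvd).1 h2.symm
  obtain ⟨x, hx, y, hy, hne, h⟩ := this
  simp only [Finset.mem_range] at hx hy
  rcases lt_or_gt_of_ne hne with hlt | hlt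
  · exact key x y hlt (by omega) h
  · exact key y x hlt (by omega) h.symm

def midp {k : ℕ} (y : Fin (k + 2) → ℕ) : Fin (k + 2) → ℕ :=
  fun j => if j = 0 ∨ j = Fin.last (k + 1) then 0 else y j

theorem reduce {k : ℕ} {ρ : Fin (k + 2) → ℕ} {R : ℕ} (A : Adm ρ R) (i : Fin (k + 2)) :
    ∀ (N : ℕ) (y : Fin (k + 2) → ℕ), vlen (midp y) = N →
    ∃ y' : Fin (k + 2) → ℕ, vlen y' = vlen y ∧ wt ρ y' = wt ρ y ∧ vlen (midp y') + 1 ≤ R := by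
  intro N
  induction N using Nat.strong_induction_on with
  | _ N ih =>
  intro y hN
  by_cases hs : vlen (midp y) + 1 ≤ R
  · exact ⟨y, rfl, rfl, hs⟩
  · obtain ⟨u, hu, hupos, a, ha⟩ := zerosum ρ (midp y) R A.pos (by omega)
    have hρ : ∀ j, ρ j ≤ R := by
      intro j
      by_cases h0 : j = 0
      · rw [h0, A.zero]; omega
      by_cases h1 : j = Fin.last (k + 1)
      · rw [h1, A.last]
      have := A.mid2 j h0 h1; omega
    have haL : a ≤ vlen u := by
      have h1 : wt ρ u ≤ vlen u * R := by
        unfold wt vlen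
        rw [Finset.sum_mul]
        exact Finset.sum_le_sum fun j _ => Nat.mul_le_mul_left _ (hρ j)
      rw [ha, mul_comm] at h1
      exact Nat.le_of_mul_le_mul_right h1 A.pos
    have huy : u ≤ y := by
      intro j
      refine (hu j).trans ?_
      unfold midp; split_ifs <;> simp
    have hys : y = (y - u) + u := by
      ext j; have : u j ≤ y j := huy j
      simp; omega
    set y1 := (y - u) + (Pi.single (Fin.last (k + 1)) a + Pi.single 0 (vlen u - a)) with hy1
    have e1 : vlen y1 = vlen y := by
      conv_rhs => rw [hys]
      rw [hy1, vlen_add, vlen_add, vlen_add, vlen_single, vlen_single]; omega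
    have e2 : wt ρ y1 = wt ρ y := by
      conv_rhs => rw [hys]
      rw [hy1, wt_add, wt_add, wt_add, wt_single, wt_single, A.zero, A.last, ha]; ring
    have e3 : midp y = midp y1 + u := by
      ext j
      have h1 : u j ≤ y j := huy j
      have h2 : u j ≤ midp y j := hu j
      by_cases hj : j = 0 ∨ j = Fin.last (k + 1)
      · simp [midp, hj] at h2 ⊢; omega
      · have hj' := hj
        push Not at hj'
        simp [midp, hy1, hj'.1, hj'.2]; omega
    have e4 : vlen (midp y) = vlen (midp y1) + vlen u := by
      conv_lhs => rw [e3]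
      rw [vlen_add]
    obtain ⟨y', h1, h2, h3⟩ := ih (vlen (midp y1)) (by omega) y1 rfl
    exact ⟨y', h1.trans e1, h2.trans e2, h3⟩

theorem main {k : ℕ} {ρ : Fin (k + 2) → ℕ} {R : ℕ} (A : Adm ρ R) (i : Fin (k + 2))
    (z : Fin (k + 2) → ℕ) (hi : 0 < z i) :
    ∃ z' : Fin (k + 2) → ℕ, vlen z' = vlen z ∧ wt ρ z' = wt ρ z ∧ 0 < z' i ∧
      wt ρ z ≤ z' (Fin.last (k + 1)) * R + R + (R - 1) * (R - 1) ∧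
      vlen z * R ≤ wt ρ z + (z' 0 * R + R + (R - 1) * (R - 1)) := by
  have hzs : z = (z - Pi.single i 1) + Pi.single i 1 := by
    ext j
    by_cases hj : j = i
    · subst hj; simp; omega
    · simp [hj]
  obtain ⟨y, h1, h2, h3⟩ := reduce A i _ (z - Pi.single i 1) rfl
  have ev : vlen (y + Pi.single i 1) = vlen z := by
    conv_rhs => rw [hzs]
    rw [vlen_add, vlen_add, h1]
  have ew : wt ρ (y + Pi.single i 1) = wt ρ z := by
    conv_rhs => rw [hzs]
    rw [wt_add, wt_add, h2]
  have hmid : vlen (midp y) * (R - 1) ≤ (R - 1) * (R - 1) :=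
    Nat.mul_le_mul_right _ (by omega)
  have hρi : ρ i ≤ R := by
    by_cases h0 : i = 0
    · rw [h0, A.zero]; omega
    by_cases h1 : i = Fin.last (k + 1)
    · rw [h1, A.last]
    have := A.mid2 i h0 h1; omega
  have hl0 : Fin.last (k + 1) ≠ 0 := Fin.last_pos.ne'
  refine ⟨y + Pi.single i 1, ev, ew, by simp, ?_, ?_⟩
  · have b1 : wt ρ y ≤ y (Fin.last (k + 1)) * R + vlen (midp y) * (R - 1) := by
      have : y (Fin.last (k + 1)) * R =
          ∑ j, if j = Fin.last (k + 1) then y j * R else 0 := by simp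
      rw [this]
      unfold wt vlen
      rw [Finset.sum_mul, ← Finset.sum_add_distrib]
      refine Finset.sum_le_sum fun j _ => ?_
      by_cases h0 : j = 0
      · simp [h0, A.zero]
      by_cases h1 : j = Fin.last (k + 1)
      · simp [h1, A.last]
      have := A.mid2 j h0 h1
      simp only [midp, h0, h1, or_self, if_false, zero_add]
      exact Nat.mul_le_mul_left _ (by omega)
    have b2 : y (Fin.last (k + 1)) * R ≤ (y + Pi.single i 1 : Fin (k + 2) → ℕ) (Fin.last (k + 1)) * R :=
      Nat.mul_le_mul_right _ (by simp)
    rw [← ew, wt_add, wt_single]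
    omega
  · have b1 : vlen y * R ≤ wt ρ y + (y 0 * R + vlen (midp y) * (R - 1)) := by
      have : y 0 * R = ∑ j, if j = 0 then y j * R else 0 := by simp
      rw [this]
      unfold wt vlen
      rw [Finset.sum_mul, Finset.sum_mul, ← Finset.sum_add_distrib, ← Finset.sum_add_distrib]
      refine Finset.sum_le_sum fun j _ => ?_
      by_cases h0 : j = 0
      · subst h0; simp only [if_true]; omega
      by_cases h1 : j = Fin.last (k + 1)
      · simp [h1, A.last]
      have := A.mid1 j h0 h1
      simp only [midp, h0, h1, or_self, if_false, zero_add]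
      rw [← mul_add]
      exact Nat.mul_le_mul_left _ (by omega)
    have b2 : y 0 * R ≤ (y + Pi.single i 1 : Fin (k + 2) → ℕ) 0 * R :=
      Nat.mul_le_mul_right _ (by simp)
    rw [← ev, ← ew, wt_add, wt_single, vlen_add, vlen_single, add_mul]
    omega

theorem arith {R n l x w : ℕ} (hR : 1 ≤ R) (hn : R ^ 2 < n) (hw : l * n ≤ w)
    (h : w ≤ x * R + R + (R - 1) * (R - 1)) : l ≤ x := by
  obtain ⟨S, rfl⟩ : ∃ S, R = S + 1 := ⟨R - 1, by omega⟩
  simp only [Nat.add_sub_cancel] at h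
  by_contra hx
  push Not at hx
  have h1 : (x + 1) * ((S + 1) ^ 2 + 1) ≤ l * n := Nat.mul_le_mul hx hn
  nlinarith [Nat.zero_le (x * S), Nat.zero_le (x * S * S)]

theorem arith2 {R n l x w : ℕ} (hR : 1 ≤ R) (hl : 1 ≤ l) (hn : R ^ 2 < n) (hw : l * (n + R) ≤ w)
    (h : w ≤ x * R + R + (R - 1) * (R - 1)) : l + 1 ≤ x := by
  have hh : ∃ x', w ≤ l * R + (x' * R + R + (R - 1) * (R - 1)) ∧ x' + l ≤ x ∨ x < l := by
    by_cases hx : x < l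
    · exact ⟨0, Or.inr hx⟩
    · obtain ⟨x', rfl⟩ := Nat.exists_eq_add_of_le (not_lt.1 hx)
      exact ⟨x', Or.inl ⟨by rw [add_mul] at h; omega, by omega⟩⟩
  obtain ⟨x', ⟨h1, h2⟩ | h1⟩ := hh
  · have := arith (l := l) (w := w - l * R) hR hn (by rw [mul_add] at hw; omega)
      (show w - l * R ≤ x' * R + R + (R - 1) * (R - 1) by omega)
    omega
  · have := arith hR hn (le_trans (Nat.mul_le_mul_left _ (Nat.le_add_right n R)) hw) h
    omega

/-- Set-up: a factorization that is not longest / not shortest. -/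
def val {m : ℕ} (ρ : Fin m → ℕ) (n : ℕ) (z : Fin m → ℕ) : ℕ := vlen z * n + wt ρ z

theorem wt_le {k : ℕ} {ρ : Fin (k + 2) → ℕ} {R : ℕ} (A : Adm ρ R) (z : Fin (k + 2) → ℕ) :
    wt ρ z ≤ vlen z * R := by
  unfold wt vlen
  rw [Finset.sum_mul]
  refine Finset.sum_le_sum fun j _ => Nat.mul_le_mul_left _ ?_
  by_cases h0 : j = 0
  · rw [h0, A.zero]; omega
  by_cases h1 : j = Fin.last (k + 1)
  · rw [h1, A.last]
  have := A.mid2 j h0 h1; omega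

theorem exists_pos {m : ℕ} (z : Fin m → ℕ) (h : 0 < vlen z) : ∃ i, 0 < z i := by
  by_contra hc
  push Not at hc
  have : vlen z = 0 := Finset.sum_eq_zero fun i _ => by have := hc i; omega
  omega

theorem wt_ge {k : ℕ} {ρ : Fin (k + 2) → ℕ} {n : ℕ}
    {a b : Fin (k + 2) → ℕ} (h : val ρ n a = val ρ n b) (hlt : vlen a < vlen b) :
    n ≤ wt ρ a := by
  obtain ⟨d, hd⟩ := Nat.exists_eq_add_of_lt hlt
  unfold val at h
  rw [hd] at h
  nlinarith [Nat.zero_le (d * n)]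

theorem vlen_pos {k : ℕ} {ρ : Fin (k + 2) → ℕ} {R n : ℕ} (A : Adm ρ R) (hn : R ^ 2 < n)
    {a b : Fin (k + 2) → ℕ} (h : val ρ n a = val ρ n b) (hlt : vlen a < vlen b) :
    0 < vlen a := by
  have h1 := wt_ge h hlt
  have h2 := wt_le A a
  by_contra hc
  have : vlen a = 0 := by omega
  rw [this] at h2
  omega

theorem toLast {k : ℕ} {ρ : Fin (k + 2) → ℕ} {R n : ℕ} (A : Adm ρ R) (hn : R ^ 2 < n)
    {a b : Fin (k + 2) → ℕ} (h : val ρ n a = val ρ n b) (hlt : vlen a < vlen b) :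
    ∃ a', vlen a' = vlen a ∧ wt ρ a' = wt ρ a ∧ (∃ i, 0 < a i ∧ 0 < a' i) ∧
      0 < a' (Fin.last (k + 1)) := by
  obtain ⟨i, hi⟩ := exists_pos a (vlen_pos A hn h hlt)
  obtain ⟨a', h1, h2, h3, h4, -⟩ := main A i a hi
  refine ⟨a', h1, h2, ⟨i, hi, h3⟩, ?_⟩
  exact arith (l := 1) A.pos hn (by rw [one_mul]; exact wt_ge h hlt) h4

theorem toZero {k : ℕ} {ρ : Fin (k + 2) → ℕ} {R n : ℕ} (A : Adm ρ R) (hn : R ^ 2 < n)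
    {a b : Fin (k + 2) → ℕ} (h : val ρ n a = val ρ n b) (hlt : vlen a < vlen b) :
    ∃ b', vlen b' = vlen b ∧ wt ρ b' = wt ρ b ∧ (∃ i, 0 < b i ∧ 0 < b' i) ∧
      0 < b' 0 := by
  obtain ⟨i, hi⟩ := exists_pos b (by omega)
  obtain ⟨b', h1, h2, h3, -, h4⟩ := main A i b hi
  refine ⟨b', h1, h2, ⟨i, hi, h3⟩, ?_⟩
  refine arith (l := 1) (w := vlen b * R - wt ρ b) A.pos hn ?_ (by omega)
  have h5 := wt_le A a
  have h6 : vlen a * R ≤ vlen b * R := Nat.mul_le_mul_right _ hlt.le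
  obtain ⟨d, hd⟩ := Nat.exists_eq_add_of_lt hlt
  have h7 : n + wt ρ b ≤ wt ρ a := by
    unfold val at h
    rw [hd] at h
    nlinarith [Nat.zero_le (d * n)]
  omega

/-- homogeneous connectedness -/
def HC {m : ℕ} (ρ : Fin m → ℕ) (L w : ℕ) : (Fin m → ℕ) → (Fin m → ℕ) → Prop :=
  Relation.ReflTransGen (fun a b => InF ρ L w a ∧ InF ρ L w b ∧ ∃ i, 0 < a i ∧ 0 < b i)

theorem HC_of_lengths {k : ℕ} {ρ : Fin (k + 2) → ℕ} {R n : ℕ} (A : Adm ρ R) (hn : R ^ 2 < n)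
    {L w : ℕ} {z z' y : Fin (k + 2) → ℕ} (hz : InF ρ L w z) (hz' : InF ρ L w z')
    (hy : val ρ n y = L * n + w) (hne : vlen y ≠ L) : HC ρ L w z z' := by
  have v1 : val ρ n z = L * n + w := by rw [val, hz.1, hz.2]
  have v2 : val ρ n z' = L * n + w := by rw [val, hz'.1, hz'.2]
  have fin : ∀ a a' j, InF ρ L w a → InF ρ L w a' → (∃ i, 0 < z i ∧ 0 < a i) →
      (∃ i, 0 < z' i ∧ 0 < a' i) → 0 < a j → 0 < a' j → HC ρ L w z z' := by
    intro a a' j ha ha' hs hs' hj hj'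
    obtain ⟨i', h1, h2⟩ := hs'
    exact ((Relation.ReflTransGen.single ⟨hz, ha, hs⟩).tail ⟨ha, ha', j, hj, hj'⟩).tail
      ⟨ha', hz', i', h2, h1⟩
  rcases lt_or_gt_of_ne hne with hlt | hlt
  · obtain ⟨a, a1, a2, a3, a4⟩ := toZero A hn (hy.trans v1.symm) (by rw [hz.1]; exact hlt)
    obtain ⟨b, b1, b2, b3, b4⟩ := toZero A hn (hy.trans v2.symm) (by rw [hz'.1]; exact hlt)
    exact fin a b _ ⟨a1.trans hz.1, a2.trans hz.2⟩ ⟨b1.trans hz'.1, b2.trans hz'.2⟩ a3 b3 a4 b4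
  · obtain ⟨a, a1, a2, a3, a4⟩ := toLast A hn (v1.trans hy.symm) (by rw [hz.1]; exact hlt)
    obtain ⟨b, b1, b2, b3, b4⟩ := toLast A hn (v2.trans hy.symm) (by rw [hz'.1]; exact hlt)
    exact fin a b _ ⟨a1.trans hz.1, a2.trans hz.2⟩ ⟨b1.trans hz'.1, b2.trans hz'.2⟩ a3 b3 a4 b4

theorem HC_SameComp {m : ℕ} {ρ : Fin m → ℕ} {n L w : ℕ} {z z' : Fin m → ℕ}
    (h : HC ρ L w z z') : SameComp (val ρ n) (L * n + w) z z' := by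
  refine Relation.ReflTransGen.mono ?_ _ _ h
  intro a b ⟨ha, hb, hs⟩
  exact ⟨by rw [val, ha.1, ha.2], by rw [val, hb.1, hb.2], hs⟩

/-- Combinatorial type of a Betti element. -/
def Q {k : ℕ} (ρ : Fin (k + 2) → ℕ) (n : ℕ) (t : ℕ × ℕ × ℕ) : Prop :=
  (t.2.2 = 0 ∧ ∃ z z', InF ρ t.1 t.2.1 z ∧ InF ρ t.1 t.2.1 z' ∧ ¬ HC ρ t.1 t.2.1 z z') ∨
  (0 < t.2.2 ∧ (∃ z, InF ρ t.1 (t.2.1 + t.2.2 * n) z) ∧ (∃ z, InF ρ (t.1 + t.2.2) t.2.1 z) ∧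
    (∀ a b i, InF ρ t.1 (t.2.1 + t.2.2 * n) a → InF ρ (t.1 + t.2.2) t.2.1 b →
      0 < a i → 0 < b i → False) ∧
    ∀ i j z, 0 < i → 0 < j → i + j = t.2.2 → ¬ InF ρ (t.1 + i) (t.2.1 + j * n) z)

def gv (n : ℕ) (t : ℕ × ℕ × ℕ) : ℕ := (t.1 + t.2.2) * n + t.2.1

theorem Q_attain {k : ℕ} {ρ : Fin (k + 2) → ℕ} {n : ℕ} {t : ℕ × ℕ × ℕ} (h : Q ρ n t) :
    (∃ z, InF ρ t.1 (t.2.1 + t.2.2 * n) z) ∧ (∃ z, InF ρ (t.1 + t.2.2) t.2.1 z) := by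
  rcases h with ⟨h0, z, z', hz, -⟩ | ⟨-, h1, h2, -⟩
  · rw [h0]; simp; exact ⟨z, hz⟩
  · exact ⟨h1, h2⟩

theorem Q_lens {k : ℕ} {ρ : Fin (k + 2) → ℕ} {R n : ℕ} (A : Adm ρ R) (hn : R ^ 2 < n)
    {t : ℕ × ℕ × ℕ} (h : Q ρ n t) (y : Fin (k + 2) → ℕ) (hy : val ρ n y = gv n t) :
    vlen y = t.1 ∨ vlen y = t.1 + t.2.2 := by
  obtain ⟨L, w, l⟩ := t
  rcases h with ⟨h0, z, z', hz, hz', hc⟩ | ⟨hl, ⟨z, hz⟩, ⟨z', hz'⟩, hns, hmid⟩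
  · simp only at *
    subst h0
    by_contra hne
    push Not at hne
    exact hc (HC_of_lengths A hn hz hz' (by simpa [gv] using hy) hne.1)
  · simp only [gv] at *
    by_contra hne
    push Not at hne
    have v1 : val ρ n z = (L + l) * n + w := by rw [val, hz.1, hz.2]; ring
    have v2 : val ρ n z' = (L + l) * n + w := by rw [val, hz'.1, hz'.2]
    rcases lt_trichotomy (vlen y) L with hlt | heq | hgt
    · obtain ⟨a, a1, a2, a3, a4⟩ := toZero A hn (hy.trans v1.symm) (by rw [hz.1]; exact hlt)
      obtain ⟨b, b1, b2, b3, b4⟩ := toZero A hn (hy.trans v2.symm) (by rw [hz'.1]; omega)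
      exact hns a b _ ⟨a1.trans hz.1, a2.trans hz.2⟩ ⟨b1.trans hz'.1, b2.trans hz'.2⟩ a4 b4
    · exact hne.1 heq
    · rcases lt_trichotomy (vlen y) (L + l) with hlt | heq | hgt'
      · obtain ⟨i, hi⟩ := Nat.exists_eq_add_of_le hgt.le
        obtain ⟨j, hj⟩ := Nat.exists_eq_add_of_le hlt.le
        refine hmid i j y (by omega) (by omega) (by omega) ⟨hi, ?_⟩
        rw [val, hj] at hy
        nlinarith
      · exact hne.2 heq
      · obtain ⟨a, a1, a2, a3, a4⟩ := toLast A hn (v1.trans hy.symm) (by rw [hz.1]; omega)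
        obtain ⟨b, b1, b2, b3, b4⟩ := toLast A hn (v2.trans hy.symm) (by rw [hz'.1]; omega)
        exact hns a b _ ⟨a1.trans hz.1, a2.trans hz.2⟩ ⟨b1.trans hz'.1, b2.trans hz'.2⟩ a4 b4

theorem Q_betti {k : ℕ} {ρ : Fin (k + 2) → ℕ} {R n : ℕ} (A : Adm ρ R) (hn : R ^ 2 < n)
    {t : ℕ × ℕ × ℕ} (h : Q ρ n t) : IsBetti (val ρ n) (gv n t) := by
  have hlens := Q_lens A hn h
  obtain ⟨L, w, l⟩ := t
  rcases h with ⟨h0, z, z', hz, hz', hc⟩ | ⟨hl, ⟨z, hz⟩, ⟨z', hz'⟩, hns, hmid⟩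
  · simp only [gv] at *
    subst h0
    simp only [add_zero, or_self] at *
    have hin : ∀ y, val ρ n y = L * n + w → InF ρ L w y := by
      intro y hy
      have := hlens y hy
      refine ⟨this, ?_⟩
      rw [val, this] at hy
      omega
    refine ⟨z, z', by rw [val, hz.1, hz.2], by rw [val, hz'.1, hz'.2], fun hs => hc ?_⟩
    refine Relation.ReflTransGen.mono ?_ _ _ hs
    intro a b ⟨ha, hb, hs⟩
    exact ⟨hin a ha, hin b hb, hs⟩
  · simp only [gv] at *
    have v1 : val ρ n z = (L + l) * n + w := by rw [val, hz.1, hz.2]; ring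
    have v2 : val ρ n z' = (L + l) * n + w := by rw [val, hz'.1, hz'.2]
    refine ⟨z, z', v1, v2, fun hs => ?_⟩
    have inv : ∀ y, SameComp (val ρ n) ((L + l) * n + w) z y → vlen y = L := by
      intro y hy
      induction hy with
      | refl => exact hz.1
      | @tail b c _ hbc ih =>
        obtain ⟨hb, hc, i, hi, hi'⟩ := hbc
        rcases hlens c hc with hcl | hcl
        · exact hcl
        · exfalso
          rw [val, ih] at hb
          rw [val, hcl] at hc
          exact hns b c i ⟨ih, by nlinarith⟩ ⟨hcl, by omega⟩ hi hi'
    have := inv z' hs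
    rw [hz'.1] at this
    omega

theorem Q_inj {k : ℕ} {ρ : Fin (k + 2) → ℕ} {R n : ℕ} (A : Adm ρ R) (hn : R ^ 2 < n)
    {t s : ℕ × ℕ × ℕ} (ht : Q ρ n t) (hs : Q ρ n s) (h : gv n t = gv n s) : t = s := by
  have l1 := Q_lens A hn ht
  have l2 := Q_lens A hn hs
  obtain ⟨⟨a, ha⟩, ⟨b, hb⟩⟩ := Q_attain ht
  obtain ⟨⟨c, hc⟩, ⟨d, hd⟩⟩ := Q_attain hs
  have va : val ρ n a = gv n t := by rw [val, ha.1, ha.2, gv]; ring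
  have vb : val ρ n b = gv n t := by rw [val, hb.1, hb.2, gv]
  have vc : val ρ n c = gv n s := by rw [val, hc.1, hc.2, gv]; ring
  have vd : val ρ n d = gv n s := by rw [val, hd.1, hd.2, gv]
  have r1 := l2 a (va.trans h)
  have r2 := l2 b (vb.trans h)
  have r3 := l1 c (vc.trans h.symm)
  have r4 := l1 d (vd.trans h.symm)
  rw [ha.1] at r1
  rw [hb.1] at r2
  rw [hc.1] at r3
  rw [hd.1] at r4
  obtain ⟨L, w, l⟩ := t
  obtain ⟨L', w', l'⟩ := s
  simp only [gv] at *
  have e1 : L = L' := by omega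
  have e2 : l = l' := by omega
  subst e1 e2
  have e3 : w = w' := by omega
  rw [e3]

theorem SameComp_symm {m : ℕ} {π : (Fin m → ℕ) → ℕ} {β : ℕ} {z z' : Fin m → ℕ}
    (h : SameComp π β z z') : SameComp π β z' z := by
  induction h with
  | refl => exact Relation.ReflTransGen.refl
  | @tail b c _ hbc ih =>
    obtain ⟨hb, hc, i, hi, hi'⟩ := hbc
    exact Relation.ReflTransGen.head ⟨hc, hb, i, hi', hi⟩ ih

theorem toHC {k : ℕ} {ρ : Fin (k + 2) → ℕ} {R n : ℕ} (A : Adm ρ R) (hn : R ^ 2 < n)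
    {β : ℕ} {z z' y : Fin (k + 2) → ℕ} (hz : val ρ n z = β) (hz' : val ρ n z' = β)
    (hy : val ρ n y = β) (hl : vlen z = vlen z') (hne : vlen y ≠ vlen z) :
    SameComp (val ρ n) β z z' := by
  have hw : wt ρ z' = wt ρ z := by
    rw [val] at hz hz'
    rw [hl] at hz
    omega
  have := HC_of_lengths (L := vlen z) (w := wt ρ z) A hn (z := z) (z' := z') ⟨rfl, rfl⟩
    ⟨hl.symm, hw⟩ (hy.trans hz.symm) hne
  have h2 := HC_SameComp (n := n) this
  rwa [← val, hz] at h2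

theorem Q_surj_aux {k : ℕ} {ρ : Fin (k + 2) → ℕ} {R n : ℕ} (A : Adm ρ R) (hn : R ^ 2 < n)
    {β : ℕ} {z z' : Fin (k + 2) → ℕ} (hz : val ρ n z = β) (hz' : val ρ n z' = β)
    (hns : ¬ SameComp (val ρ n) β z z') (hlt : vlen z < vlen z') :
    ∃ t, Q ρ n t ∧ gv n t = β := by
  obtain ⟨l, hl⟩ := Nat.exists_eq_add_of_le hlt.le
  have hw : wt ρ z = wt ρ z' + l * n := by
    rw [val] at hz hz'
    rw [hl] at hz'
    nlinarith
  have hβ : gv n (vlen z, wt ρ z', l) = β := by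
    simp only [gv]; rw [← hl]; exact hz'
  refine ⟨(vlen z, wt ρ z', l), Or.inr ⟨by simp only; omega, ⟨z, rfl, hw⟩, ⟨z', hl, rfl⟩, ?_, ?_⟩, hβ⟩
  · simp only
    intro a b i ha hb hi hi'
    have va : val ρ n a = β := by rw [← hβ, val, ha.1, ha.2, gv]; ring
    have vb : val ρ n b = β := by rw [← hβ, val, hb.1, hb.2, gv]
    have h1 := toHC A hn hz va hz' ha.1.symm hlt.ne'
    have h2 := toHC A hn vb hz' hz (hb.1.trans hl.symm) (by rw [hb.1, ← hl]; exact hlt.ne)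
    exact hns ((h1.tail ⟨va, vb, i, hi, hi'⟩).trans h2)
  · simp only
    intro i j y hi hj hij hy
    have vy : val ρ n y = β := by rw [← hβ, val, hy.1, hy.2, gv, ← hij]; ring
    have ly := hy.1
    obtain ⟨a, a1, a2, a3, a4⟩ := toLast A hn (hz.trans hz'.symm) hlt
    obtain ⟨b, b1, b2, b3, b4⟩ := toLast A hn (vy.trans hz'.symm) (by omega)
    have va : val ρ n a = β := by rw [val, a1, a2]; exact hz
    have vb : val ρ n b = β := by rw [val, b1, b2]; exact vy
    obtain ⟨c, c1, c2, c3, c4⟩ := toZero A hn (hz.trans vy.symm) (by omega)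
    obtain ⟨d, d1, d2, d3, d4⟩ := toZero A hn (hz.trans hz'.symm) hlt
    have vc : val ρ n c = β := by rw [val, c1, c2]; exact vy
    have vd : val ρ n d = β := by rw [val, d1, d2]; exact hz'
    have s1 : SameComp (val ρ n) β z a := Relation.ReflTransGen.single ⟨hz, va, a3⟩
    have s2 : SameComp (val ρ n) β a b := Relation.ReflTransGen.single ⟨va, vb, _, a4, b4⟩
    have s3 : SameComp (val ρ n) β y b := Relation.ReflTransGen.single ⟨vy, vb, b3⟩
    have s4 : SameComp (val ρ n) β y c := Relation.ReflTransGen.single ⟨vy, vc, c3⟩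
    have s5 : SameComp (val ρ n) β c d := Relation.ReflTransGen.single ⟨vc, vd, _, c4, d4⟩
    have s6 : SameComp (val ρ n) β z' d := Relation.ReflTransGen.single ⟨hz', vd, d3⟩
    exact hns (s1.trans <| s2.trans <| (SameComp_symm s3).trans <| s4.trans <|
      s5.trans (SameComp_symm s6))

theorem Q_surj {k : ℕ} {ρ : Fin (k + 2) → ℕ} {R n : ℕ} (A : Adm ρ R) (hn : R ^ 2 < n)
    {β : ℕ} (h : IsBetti (val ρ n) β) : ∃ t, Q ρ n t ∧ gv n t = β := by
  obtain ⟨z, z', hz, hz', hns⟩ := h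
  rcases lt_trichotomy (vlen z) (vlen z') with hlt | heq | hlt
  · exact Q_surj_aux A hn hz hz' hns hlt
  · have hw : wt ρ z' = wt ρ z := by
      rw [val] at hz hz'
      rw [heq] at hz
      omega
    refine ⟨(vlen z, wt ρ z, 0), Or.inl ⟨rfl, z, z', ⟨rfl, rfl⟩, ⟨heq.symm, hw⟩, ?_⟩, ?_⟩
    · intro hc
      have := HC_SameComp (n := n) hc
      simp only at this
      rw [← val, hz] at this
      exact hns this
    · simpa [gv, val] using hz
  · exact Q_surj_aux A hn hz' hz (fun hs => hns (SameComp_symm hs)) hlt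

theorem ncard_betti {k : ℕ} {ρ : Fin (k + 2) → ℕ} {R n : ℕ} (A : Adm ρ R) (hn : R ^ 2 < n) :
    {t | Q ρ n t}.ncard = {β | IsBetti (val ρ n) β}.ncard := by
  refine Set.ncard_congr (fun t _ => gv n t) ?_ ?_ ?_
  · intro t ht; exact Q_betti A hn ht
  · intro t s ht hs h; exact Q_inj A hn ht hs h
  · intro β hβ
    obtain ⟨t, h1, h2⟩ := Q_surj A hn hβ
    exact ⟨t, h1, h2⟩

/-- Subtracting `a` copies of `e_0` and `b` copies of `e_last`. -/
theorem sub_ends {k : ℕ} {ρ : Fin (k + 2) → ℕ} {R : ℕ} (A : Adm ρ R) {L w a b : ℕ}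
    {z : Fin (k + 2) → ℕ} (hz : InF ρ (L + a + b) (w + b * R) z) (h0 : a ≤ z 0)
    (h1 : b ≤ z (Fin.last (k + 1))) :
    ∃ y, InF ρ L w y ∧ z = y + (Pi.single 0 a + Pi.single (Fin.last (k + 1)) b) := by
  have hl0 : Fin.last (k + 1) ≠ 0 := Fin.last_pos.ne'
  have hs : z = (z - (Pi.single 0 a + Pi.single (Fin.last (k + 1)) b)) +
      (Pi.single 0 a + Pi.single (Fin.last (k + 1)) b) := by
    ext j
    by_cases hj : j = 0
    · subst hj; simp [hl0.symm]; omega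
    by_cases hj' : j = Fin.last (k + 1)
    · subst hj'; simp [hl0]; omega
    simp [hj, hj']
  refine ⟨_, ⟨?_, ?_⟩, hs⟩
  · have := hz.1
    rw [hs, vlen_add, vlen_add, vlen_single, vlen_single] at this
    omega
  · have := hz.2
    rw [hs, wt_add, wt_add, wt_single, wt_single, A.zero, A.last] at this
    omega

theorem add_ends {k : ℕ} {ρ : Fin (k + 2) → ℕ} {R : ℕ} (A : Adm ρ R) {L w : ℕ} (a b : ℕ)
    {y : Fin (k + 2) → ℕ} (hy : InF ρ L w y) :
    InF ρ (L + a + b) (w + b * R) (y + (Pi.single 0 a + Pi.single (Fin.last (k + 1)) b)) := by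
  refine ⟨?_, ?_⟩
  · rw [vlen_add, vlen_add, vlen_single, vlen_single, hy.1]; ring
  · rw [wt_add, wt_add, wt_single, wt_single, A.zero, A.last, hy.2]; ring

def sh (t : ℕ × ℕ × ℕ) : ℕ × ℕ × ℕ := (t.1 + t.2.2, t.2.1, t.2.2)

/-- Lower element: in `M_{n+R}`, move to an element with last coordinate at least `l+1`. -/
theorem lowShift {k : ℕ} {ρ : Fin (k + 2) → ℕ} {R n : ℕ} (A : Adm ρ R) (hn : R ^ 2 < n)
    {L w l : ℕ} (hl : 0 < l) {a : Fin (k + 2) → ℕ} (ha : InF ρ L (w + l * (n + R)) a)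
    (i : Fin (k + 2)) (hi : 0 < a i) :
    ∃ y, InF ρ (L - l) (w + l * n) y ∧ 0 < y i ∧ l ≤ L := by
  have hl0 : Fin.last (k + 1) ≠ 0 := Fin.last_pos.ne'
  obtain ⟨a', h1, h2, h3, h4, -⟩ := main A i a hi
  have h5 : l + 1 ≤ a' (Fin.last (k + 1)) := arith2 A.pos hl hn (by rw [ha.2]; omega) h4
  have hlL : l ≤ L := by
    have : a' (Fin.last (k + 1)) ≤ vlen a' :=
      Finset.single_le_sum (fun j _ => Nat.zero_le (a' j)) (Finset.mem_univ _)
    rw [h1, ha.1] at this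
    omega
  obtain ⟨y, hy, he⟩ := sub_ends A (L := L - l) (w := w + l * n) (a := 0) (b := l) (z := a')
    ⟨by rw [h1, ha.1]; omega, by rw [h2, ha.2]; ring⟩ (Nat.zero_le _) (by omega)
  refine ⟨y, hy, ?_, hlL⟩
  by_cases hj : i = Fin.last (k + 1)
  · subst hj
    rw [he] at h5
    simp [hl0] at h5
    omega
  · rw [he] at h3
    simpa [hj] using h3

theorem highShift {k : ℕ} {ρ : Fin (k + 2) → ℕ} {R n : ℕ} (A : Adm ρ R) (hn : R ^ 2 < n)
    {L w l : ℕ} (hl : 0 < l) {a b : Fin (k + 2) → ℕ} (ha : InF ρ L (w + l * (n + R)) a)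
    (hb : InF ρ (L + l) w b)
    (i : Fin (k + 2)) (hi : 0 < b i) :
    ∃ y, InF ρ L w y ∧ 0 < y i := by
  obtain ⟨b', h1, h2, h3, -, h4⟩ := main A i b hi
  have hwl := wt_le A a
  rw [ha.1, ha.2] at hwl
  rw [hb.1, hb.2, add_mul] at h4
  have h5 : l + 1 ≤ b' 0 :=
    arith2 (w := L * R + l * R - w) A.pos hl hn (by omega) (by omega)
  obtain ⟨y, hy, he⟩ := sub_ends A (L := L) (w := w) (a := l) (b := 0) (z := b')
    ⟨by rw [h1, hb.1]; omega, by rw [h2, hb.2]; ring⟩ (by omega) (by omega)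
  refine ⟨y, hy, ?_⟩
  by_cases hj : i = 0
  · subst hj
    rw [he] at h5
    simp at h5
    omega
  · rw [he] at h3
    simpa [hj] using h3

theorem Q_shift {k : ℕ} {ρ : Fin (k + 2) → ℕ} {R n : ℕ} (A : Adm ρ R) (hn : R ^ 2 < n)
    (t : ℕ × ℕ × ℕ) : Q ρ n t ↔ Q ρ (n + R) (sh t) := by
  obtain ⟨L, w, l⟩ := t
  rcases Nat.eq_zero_or_pos l with h0 | hl
  · subst h0; simp [Q, sh]
  · simp only [Q, sh, hl, hl.ne', false_and, false_or, true_and]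
    constructor
    · rintro ⟨⟨z, hz⟩, ⟨z', hz'⟩, hns, hmid⟩
      have hz1 : InF ρ (L + l) (w + l * (n + R))
          (z + (Pi.single 0 0 + Pi.single (Fin.last (k + 1)) l)) := by
        have := add_ends A 0 l hz
        rwa [add_zero, add_assoc, ← mul_add] at this
      refine ⟨⟨_, hz1⟩, ⟨z' + (Pi.single 0 l + Pi.single (Fin.last (k + 1)) 0), ?_⟩, ?_, ?_⟩
      · have h := add_ends A l 0 hz'
        rwa [zero_mul, add_zero, add_zero] at h
      · intro a b i ha hb hi hi'
        obtain ⟨y, hy, hyi, -⟩ := lowShift A hn hl ha i hi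
        obtain ⟨y', hy', hyi'⟩ := highShift A hn hl ha hb i hi'
        rw [Nat.add_sub_cancel] at hy
        exact hns y y' i hy hy' hyi hyi'
      · intro i j y hi hj hij hy
        have hwl := wt_le A (z + (Pi.single 0 0 + Pi.single (Fin.last (k + 1)) l))
        rw [hz1.1, hz1.2] at hwl
        obtain ⟨x, hx⟩ := exists_pos y (by rw [hy.1]; omega)
        obtain ⟨y', h1, h2, h3, h4, h5⟩ := main A x y hx
        rw [hy.1, hy.2] at h5
        rw [hy.2] at h4
        have g1 : j ≤ y' (Fin.last (k + 1)) :=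
          arith A.pos hn (by rw [mul_add]; omega) h4
        have g2 : i ≤ y' 0 := by
          refine arith (w := (L + l + i) * R - (w + j * (n + R))) A.pos hn ?_ (by omega)
          have : (L + l + i) * R = (L + l) * R + i * R := by ring
          have h7 : l * (n + R) = i * n + i * R + j * (n + R) := by rw [← hij]; ring
          omega
        obtain ⟨u, hu, -⟩ := sub_ends A (L := L + i) (w := w + j * n) (a := i) (b := j) (z := y')
          ⟨by rw [h1, hy.1]; omega, by rw [h2, hy.2]; ring⟩ g2 g1
        exact hmid i j u hi hj hij hu
    · rintro ⟨⟨z, hz⟩, ⟨z', hz'⟩, hns, hmid⟩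
      have hzp : 0 < vlen z := by rw [hz.1]; omega
      have hzp' : 0 < vlen z' := by rw [hz'.1]; omega
      obtain ⟨x, hx⟩ := exists_pos z hzp
      obtain ⟨x', hx'⟩ := exists_pos z' hzp'
      obtain ⟨y, hy, -⟩ := lowShift A hn hl hz x hx
      obtain ⟨y', hy', -⟩ := highShift A hn hl hz hz' x' hx'
      rw [Nat.add_sub_cancel] at hy
      refine ⟨⟨y, hy⟩, ⟨y', hy'⟩, ?_, ?_⟩
      · intro a b i ha hb hi hi'
        have e1 := add_ends A 0 l ha
        have e2 := add_ends A l 0 hb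
        rw [add_zero, add_assoc, ← mul_add] at e1
        rw [zero_mul, add_zero, add_zero] at e2
        exact hns _ _ i e1 e2 (by simp only [Pi.add_apply]; omega)
          (by simp only [Pi.add_apply]; omega)
      · intro i j u hi hj hij hu
        have e := add_ends A i j hu
        refine hmid i j _ hi hj hij (?_ : InF ρ _ _ (u + (Pi.single 0 i + Pi.single (Fin.last (k + 1)) j)))
        have q1 : L + i + i + j = L + l + i := by omega
        have q2 : w + j * n + j * R = w + j * (n + R) := by ring
        rwa [q1, q2] at e

theorem sh_surj {k : ℕ} {ρ : Fin (k + 2) → ℕ} {R n : ℕ} (A : Adm ρ R) (hn : R ^ 2 < n)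
    (t : ℕ × ℕ × ℕ) (h : Q ρ (n + R) t) : ∃ s, sh s = t := by
  obtain ⟨L, w, l⟩ := t
  suffices hlL : l ≤ L from ⟨(L - l, w, l), by simp [sh, Nat.sub_add_cancel hlL]⟩
  rcases Nat.eq_zero_or_pos l with h0 | hl
  · omega
  · obtain ⟨⟨z, hz⟩, -⟩ := Q_attain h
    simp only at hz
    have hw := wt_le A z
    rw [hz.1, hz.2] at hw
    have : l * R ≤ L * R := by rw [mul_add] at hw; omega
    exact Nat.le_of_mul_le_mul_right this A.pos

theorem ncard_shift {k : ℕ} {ρ : Fin (k + 2) → ℕ} {R n : ℕ} (A : Adm ρ R) (hn : R ^ 2 < n) :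
    {t | Q ρ n t}.ncard = {t | Q ρ (n + R) t}.ncard := by
  refine Set.ncard_congr (fun t _ => sh t) ?_ ?_ ?_
  · intro t ht; exact (Q_shift A hn t).1 ht
  · rintro ⟨L, w, l⟩ ⟨L', w', l'⟩ _ _ h
    simp only [sh, Prod.mk.injEq] at h ⊢
    omega
  · intro t ht
    obtain ⟨s, rfl⟩ := sh_surj A hn t ht
    exact ⟨s, (Q_shift A hn s).2 ht, rfl⟩

theorem piM_eq (k n : ℕ) (r : Fin (k + 1) → ℕ) :
    piM k n r = val (Fin.cons 0 r : Fin (k + 2) → ℕ) n := by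
  funext z
  unfold piM val vlen wt
  rw [Fin.sum_univ_succ (n := k + 1) (f := z),
    Fin.sum_univ_succ (n := k + 1) (f := fun i => z i * (Fin.cons 0 r : Fin (k + 2) → ℕ) i)]
  simp only [Fin.cons_zero, Fin.cons_succ, mul_add, Finset.sum_add_distrib, add_mul,
    Finset.sum_mul]
  ring

end Shift

/-- The number of Betti elements of `M_n` is `r_k`-periodic for `n > r_k²`. -/
theorem stmt12 (k : ℕ) (r : Fin (k + 1) → ℕ) (hmono : StrictMono r) (hpos : 0 < r 0)
    (n : ℕ) (hn : r (Fin.last k) ^ 2 < n)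
    (hprim : Primitive k n r) (hprim' : Primitive k (n + r (Fin.last k)) r) :
    {β | IsBetti (piM k (n + r (Fin.last k)) r) β}.ncard
      = {β | IsBetti (piM k n r) β}.ncard := by
  have A : Shift.Adm (Fin.cons 0 r : Fin (k + 2) → ℕ) (r (Fin.last k)) := by
    have hp : ∀ i, 1 ≤ r i := fun i => hpos.trans_le (hmono.monotone (Fin.zero_le i))
    refine ⟨hp _, rfl, ?_, ?_, ?_⟩
    · rw [← Fin.succ_last, Fin.cons_succ]
    · intro j h0 _
      obtain ⟨i, rfl⟩ := Fin.exists_succ_eq.2 h0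
      rw [Fin.cons_succ]; exact hp i
    · intro j h0 h1
      obtain ⟨i, rfl⟩ := Fin.exists_succ_eq.2 h0
      rw [Fin.cons_succ]
      have : i ≠ Fin.last k := by
        rintro rfl; exact h1 (Fin.succ_last k)
      exact hmono (Fin.lt_last_iff_ne_last.2 this)
  rw [Shift.piM_eq, Shift.piM_eq, ← Shift.ncard_betti A hn,
    ← Shift.ncard_betti A (hn.trans_le (Nat.le_add_right _ _)), Shift.ncard_shift A hn]
end
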